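/- arXiv:1708.05218 — 2 statements merged into one kernel-verified Lean document; each statement's English description precedes it below -/
import Mathlib

section
/- Let X be a real Banach space with the Daugavet property. Then there exist convex, closed, bounded SCD sets A, D ⊂ X such that the Minkowski sum A + D is not SCD. -/
open Bornology Set Pointwise

variable {X : Type*} [NormedAddCommGroup X] [NormedSpace ℝ X]

/-- The sliceSet of `A` given by the functional `f` and `ε > 0`. -/
noncomputable def sliceSet (A : Set X) (f : X →L[ℝ] ℝ) (ε : ℝ) : Set X :=
  {x ∈ A | sSup (f '' A) - ε < f x}

/-- `S` is a sliceSet of `A`: a nonempty set of the form `sliceSet A f ε` with `f ≠ 0`, `ε > 0`. -/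
def IsSlice (A S : Set X) : Prop :=
  S.Nonempty ∧ ∃ f : X →L[ℝ] ℝ, f ≠ 0 ∧ ∃ ε : ℝ, 0 < ε ∧ S = sliceSet A f ε

/-- A sequence of subsets of `A` is determining if every set `B` meeting all of them
has `A` inside the closed convex hull of `B`. -/
def Determining (A : Set X) (V : ℕ → Set X) : Prop :=
  ∀ B : Set X, (∀ n, (B ∩ V n).Nonempty) → A ⊆ closure (convexHull ℝ B)

/-- A bounded set is slicely countably determined if it has a determining sequence of slices. -/
def IsSCD (A : Set X) : Prop :=
  ∃ V : ℕ → Set X, (∀ n, IsSlice A (V n)) ∧ Determining A V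

/-- The Daugavet property: every rank-one operator `x ↦ f x • y` satisfies the
Daugavet equation `‖Id + T‖ = 1 + ‖T‖`. -/
def DaugavetProperty (X : Type*) [NormedAddCommGroup X] [NormedSpace ℝ X] : Prop :=
  ∀ (f : X →L[ℝ] ℝ) (y : X),
    ‖ContinuousLinearMap.id ℝ X + f.smulRight y‖ = 1 + ‖f.smulRight y‖

/-!
The Daugavet property yields a countable subset `N` of the unit ball such that each point of `N`
lies in the closed convex hull of those points of `N` that are almost orthogonal to a prescribed
finite subset of `N`. Let `x` be a sequence in `N` that visits each point infinitely often, labelled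
by distinct real numbers `a n` so that each point of `N` recurs with labels near every `a n`. The
sets `A` and `D` are the closed convex hulls of the points `x n + (a n, a n ², ± 2⁻ⁿ)`, where the
triple stands for coordinates in a three-dimensional subspace `F` (and `x n` is first projected
along `F`).

The parabola and the strictly decreasing third coordinate make every generator strongly exposed, so
`A` and `D` are SCD. For every functional `f`, however, the lift in one of the two summands is
nonpositive under `f`. In that summand, a generator in a slice can be exchanged for a later one with
almost the same label whose `N`-component is almost orthogonal to everything chosen before. Hence
any sequence of slices of `A + D` contains points congruent modulo `F` to `z n + w n` with
`w n ∈ N`, where some functional `φ` vanishes on `F` and on all `z n` but is positive somewhere on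
`N`. On these points `φ` is at most `sup_N φ`, while on `A + D` it comes close to `2 sup_N φ`.
-/

section ClosedConvexHull

lemma exists_lt_apply_of_mem_closure_convexHull {S : Set X} {b : X}
    (hb : b ∈ closure (convexHull ℝ S)) {f : X →L[ℝ] ℝ} {c : ℝ} (hc : c < f b) :
    ∃ y ∈ S, c < f y := by
  by_contra! hS
  have hsub : closure (convexHull ℝ S) ⊆ {b | f b ≤ c} :=
    closure_minimal (convexHull_min hS (convex_halfSpace_le f.isLinear c))
      (isClosed_le f.continuous continuous_const)
  exact hc.not_ge (hsub hb)

lemma exists_countable_subset_mem_closure_convexHull {S : Set X} {b : X}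
    (hb : b ∈ closure (convexHull ℝ S)) :
    ∃ W ⊆ S, W.Countable ∧ b ∈ closure (convexHull ℝ W) := by
  obtain ⟨u, hu, hlim⟩ := mem_closure_iff_seq_limit.1 hb
  have hfinite : ∀ n, ∃ T : Finset X, ↑T ⊆ S ∧ u n ∈ convexHull ℝ (T : Set X) := fun n => by
    simpa [convexHull_eq_union_convexHull_finite_subsets S] using hu n
  choose T hTS huT using hfinite
  refine ⟨⋃ n, (T n : Set X), iUnion_subset hTS,
    countable_iUnion fun n => (T n).countable_toSet, ?_⟩
  exact mem_closure_of_tendsto hlim <| .of_forall fun n =>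
    convexHull_mono (subset_iUnion (fun n => (T n : Set X)) n) (huT n)

end ClosedConvexHull

section AlmostOrthogonal

/-- The points `z` of the unit ball such that every `u ∈ F` is Birkhoff–James orthogonal to `z` up
to the factor `θ`. Multiples of `z` need not be mentioned, because `F` is closed under scaling; see
`mul_norm_le_norm_add_smul`. -/
def almostOrthogonal (F : Submodule ℝ X) (θ : ℝ) : Set X :=
  {z | ‖z‖ ≤ 1 ∧ ∀ u ∈ F, θ * ‖u‖ ≤ ‖u + z‖}

lemma almostOrthogonal_anti {F G : Submodule ℝ X} (hFG : F ≤ G) {θ τ : ℝ} (hθτ : θ ≤ τ) :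
    almostOrthogonal G τ ⊆ almostOrthogonal F θ := fun _z hz =>
  ⟨hz.1, fun u hu => (mul_le_mul_of_nonneg_right hθτ (norm_nonneg u)).trans (hz.2 u (hFG hu))⟩

lemma mul_norm_le_norm_add_smul {F : Submodule ℝ X} {θ : ℝ} (hθ : θ ≤ 1) {z : X}
    (hz : z ∈ almostOrthogonal F θ) {u : X} (hu : u ∈ F) (l : ℝ) :
    θ * ‖u‖ ≤ ‖u + l • z‖ := by
  rcases eq_or_ne l 0 with rfl | hl
  · simpa using mul_le_of_le_one_left (norm_nonneg u) hθ
  · have hscaled := hz.2 (l⁻¹ • u) (F.smul_mem _ hu)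
    calc θ * ‖u‖ = ‖l‖ * (θ * ‖l⁻¹ • u‖) := by
          rw [norm_smul, norm_inv]; field_simp
      _ ≤ ‖l‖ * ‖l⁻¹ • u + z‖ := by gcongr
      _ = ‖u + l • z‖ := by rw [← norm_smul, smul_add, smul_inv_smul₀ hl]

lemma mem_almostOrthogonal_of_forall_norm_eq_one {F : Submodule ℝ X} {η : ℝ} (hη : η ≤ 1) {z : X}
    (hz : ‖z‖ ≤ 1) (hF : ∀ v ∈ F, ‖v‖ = 1 → 2 - η ≤ ‖z + v‖) :
    z ∈ almostOrthogonal F (1 - η) := by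
  refine ⟨hz, fun u hu => ?_⟩
  rcases eq_or_ne u 0 with rfl | hu0
  · simp
  have hpos : 0 < ‖u‖ := norm_pos_iff.2 hu0
  obtain ⟨v, hv⟩ : ∃ v, v = ‖u‖⁻¹ • u := ⟨_, rfl⟩
  have huv : u = ‖u‖ • v := by rw [hv, smul_inv_smul₀ hpos.ne']
  have hv1 : ‖v‖ = 1 := by
    rw [hv, norm_smul, norm_inv, norm_norm, inv_mul_cancel₀ hpos.ne']
  have hzv : 2 - η ≤ ‖z + v‖ := hF v (hv ▸ F.smul_mem _ hu) hv1
  rcases le_total 1 ‖u‖ with hge | hle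
  · have htri : ‖u‖ * ‖z + v‖ ≤ ‖u + z‖ + (‖u‖ - 1) * ‖z‖ := calc
      ‖u‖ * ‖z + v‖ = ‖u + z + (‖u‖ - 1) • z‖ := by
        rw [← norm_smul_of_nonneg hpos.le, smul_add, ← huv]; congr 1; module
      _ ≤ ‖u + z‖ + (‖u‖ - 1) * ‖z‖ := by
        rw [← norm_smul_of_nonneg (sub_nonneg.2 hge)]; exact norm_add_le _ _
    nlinarith
  · have htri : ‖z + v‖ ≤ ‖u + z‖ + (1 - ‖u‖) := calc
      ‖z + v‖ = ‖u + z + (1 - ‖u‖) • v‖ := by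
        rw [sub_smul, ← huv]; congr 1; module
      _ ≤ ‖u + z‖ + (1 - ‖u‖) := by
        simpa [norm_smul_of_nonneg (sub_nonneg.2 hle), hv1] using
          norm_add_le (u + z) ((1 - ‖u‖) • v)
    nlinarith

end AlmostOrthogonal

section Daugavet

lemma DaugavetProperty.nontrivial (h : DaugavetProperty X) : Nontrivial X := by
  by_contra hX
  rw [not_nontrivial_iff_subsingleton] at hX
  simpa [Subsingleton.elim (ContinuousLinearMap.id ℝ X) 0] using h 0 0

lemma apply_le_opNorm (f : X →L[ℝ] ℝ) {x : X} (hx : ‖x‖ ≤ 1) : f x ≤ ‖f‖ :=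
  (Real.le_norm_self _).trans (f.unit_le_opNorm x hx)

lemma DaugavetProperty.exists_lt_norm_add_smul (h : DaugavetProperty X) (g : X →L[ℝ] ℝ) {u : X}
    (hu : ‖u‖ = 1) {δ : ℝ} (hδ : 0 < δ) :
    ∃ x, ‖x‖ ≤ 1 ∧ 0 ≤ g x ∧ 1 + ‖g‖ - δ < ‖x + g x • u‖ := by
  have hnorm : 1 + ‖g‖ - δ < ‖ContinuousLinearMap.id ℝ X + g.smulRight u‖ := by
    rw [h g u, ContinuousLinearMap.norm_smulRight_apply, hu]
    linarith
  obtain ⟨x, hx, hxδ⟩ := ContinuousLinearMap.exists_lt_apply_of_lt_opNorm _ hnorm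
  replace hxδ : 1 + ‖g‖ - δ < ‖x + g x • u‖ := by simpa using hxδ
  rcases le_total 0 (g x) with hpos | hneg
  · exact ⟨x, hx.le, hpos, hxδ⟩
  · refine ⟨-x, by simpa using hx.le, by simpa using hneg, ?_⟩
    rwa [map_neg, neg_smul, ← neg_add, norm_neg]

lemma DaugavetProperty.exists_functional_almost_norming (h : DaugavetProperty X)
    (g : X →L[ℝ] ℝ) {u : X} (hu : ‖u‖ = 1) {δ : ℝ} (hδ : 0 < δ) :
    ∃ (x : X) (k : X →L[ℝ] ℝ), ‖x‖ ≤ 1 ∧ ‖k‖ ≤ 1 ∧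
      1 - δ < k x ∧ 1 - δ < k u ∧ ‖g‖ - δ < g x := by
  rcases eq_or_ne g 0 with rfl | hg
  · obtain ⟨k, hk, hku⟩ := exists_dual_vector'' ℝ u
    replace hku : k u = 1 := by simpa [hu] using hku
    exact ⟨u, k, hu.le, hk, by linarith, by linarith, by simpa using hδ⟩
  have hgpos : 0 < ‖g‖ := norm_pos_iff.2 hg
  obtain ⟨e, he0, he⟩ : ∃ e, 0 < e ∧ e < min δ (min (δ * ‖g‖) ‖g‖) :=
    exists_between (by positivity)
  simp only [lt_min_iff] at he
  obtain ⟨heδ, heδg, heg⟩ := he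
  obtain ⟨x, hx, hgx0, hxe⟩ := h.exists_lt_norm_add_smul g hu he0
  obtain ⟨k, hk, hkx⟩ := exists_dual_vector'' ℝ (x + g x • u)
  have hsum : 1 + ‖g‖ - e < k x + g x * k u := by
    rw [← smul_eq_mul, ← map_smul, ← map_add, hkx]; exact hxe
  have hkx1 : k x ≤ 1 := (apply_le_opNorm k hx).trans hk
  have hku1 : k u ≤ 1 := (apply_le_opNorm k hu.le).trans hk
  have hgx : g x ≤ ‖g‖ := apply_le_opNorm g hx
  have hprod : g x * k u ≤ g x := mul_le_of_le_one_right hgx0 hku1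
  have hku0 : 0 < k u := by
    by_contra! hku0
    nlinarith
  refine ⟨x, k, hx, hk, by linarith, ?_, by linarith⟩
  refine lt_of_mul_lt_mul_left ?_ hgpos.le
  calc ‖g‖ * (1 - δ) < g x * k u := by linarith
    _ ≤ ‖g‖ * k u := by gcongr

-- A slice `{x ∈ B_X | c < g x}` of the unit ball is nonempty exactly when `c < ‖g‖`.
lemma DaugavetProperty.exists_subslice (h : DaugavetProperty X) {g : X →L[ℝ] ℝ} {c : ℝ}
    (hc : c < ‖g‖) {u : X} (hu : ‖u‖ = 1) {η : ℝ} (hη : 0 < η) :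
    ∃ (g' : X →L[ℝ] ℝ) (c' : ℝ), c' < ‖g'‖ ∧
      ∀ x, ‖x‖ ≤ 1 → c' < g' x → c < g x ∧ 2 - η < ‖x + u‖ := by
  obtain ⟨δ, hδ0, hδ⟩ : ∃ δ, 0 < δ ∧ δ < min ((‖g‖ - c) / 2) (η / 3) :=
    exists_between (lt_min (by linarith) (by linarith))
  rw [lt_min_iff] at hδ
  obtain ⟨x, k, hx, hk, hkx, hku, hgx⟩ := h.exists_functional_almost_norming g hu hδ0
  refine ⟨k + g, 1 + ‖g‖ - 2 * δ, ?_, fun z hz hzk => ?_⟩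
  · calc 1 + ‖g‖ - 2 * δ < (k + g) x := by rw [_root_.add_apply]; linarith
      _ ≤ ‖k + g‖ := apply_le_opNorm _ hx
  · rw [_root_.add_apply] at hzk
    have hkz : k z ≤ 1 := (apply_le_opNorm k hz).trans hk
    have hgz : g z ≤ ‖g‖ := apply_le_opNorm g hz
    refine ⟨by linarith, ?_⟩
    calc 2 - η < k z + k u := by linarith
      _ = k (z + u) := (map_add k z u).symm
      _ ≤ ‖k (z + u)‖ := Real.le_norm_self _
      _ ≤ 1 * ‖z + u‖ := k.le_of_opNorm_le hk _
      _ = ‖z + u‖ := one_mul _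

lemma DaugavetProperty.exists_mem_slice_forall_lt_norm_add (h : DaugavetProperty X) {η : ℝ}
    (hη : 0 < η) {t : Set X} (ht : t.Finite) (ht1 : ∀ u ∈ t, ‖u‖ = 1) {g : X →L[ℝ] ℝ} {c : ℝ}
    (hc : c < ‖g‖) :
    ∃ z, ‖z‖ ≤ 1 ∧ c < g z ∧ ∀ u ∈ t, 2 - η < ‖z + u‖ := by
  induction t, ht using Set.Finite.induction_on generalizing g c with
  | empty =>
    have := h.nontrivial
    obtain ⟨u, hu⟩ := exists_norm_eq X zero_le_one
    obtain ⟨x, -, hx, -, -, -, hgx⟩ :=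
      h.exists_functional_almost_norming g hu (sub_pos.2 hc)
    exact ⟨x, hx, by linarith, by simp⟩
  | @insert u s _ _ ih =>
    obtain ⟨g', c', hc', hsub⟩ := h.exists_subslice hc (ht1 u (mem_insert u s)) hη
    obtain ⟨z, hz, hgz, hzs⟩ := ih (fun v hv => ht1 v (mem_insert_of_mem u hv)) hc'
    exact ⟨z, hz, (hsub z hz hgz).1, forall_mem_insert.2 ⟨(hsub z hz hgz).2, hzs⟩⟩

lemma DaugavetProperty.exists_mem_almostOrthogonal (h : DaugavetProperty X) (F : Submodule ℝ X)
    [FiniteDimensional ℝ F] {θ : ℝ} (hθ : θ < 1) {g : X →L[ℝ] ℝ} {c : ℝ} (hc : c < ‖g‖) :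
    ∃ z ∈ almostOrthogonal F θ, c < g z := by
  obtain ⟨η, hη0, hη⟩ : ∃ η, 0 < η ∧ η < min ((1 - θ) / 2) (1 / 2) :=
    exists_between (lt_min (by linarith) (by norm_num))
  rw [lt_min_iff] at hη
  obtain ⟨s, hs, hsfin, hcover⟩ := (isCompact_sphere (0 : F) 1).finite_cover_balls hη0
  have hs1 : ∀ u ∈ ((↑) : F → X) '' s, ‖u‖ = 1 := by
    rintro _ ⟨v, hv, rfl⟩
    simpa using hs hv
  obtain ⟨z, hz, hgz, hzs⟩ :=
    h.exists_mem_slice_forall_lt_norm_add hη0 (hsfin.image _) hs1 hc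
  have hsphere : ∀ u ∈ F, ‖u‖ = 1 → 2 - 2 * η ≤ ‖z + u‖ := by
    intro u hu hu1
    obtain ⟨v, hvs, huv⟩ : ∃ v ∈ s, dist (⟨u, hu⟩ : F) v < η := by
      simpa using @hcover ⟨u, hu⟩ (by simpa using hu1)
    have hdist : dist (z + u) (z + v) < η := by rwa [dist_add_left]
    have hzv := hzs v (mem_image_of_mem _ hvs)
    have := norm_le_norm_add_norm_sub (z + u) (z + v)
    rw [dist_eq_norm] at hdist
    linarith
  exact ⟨z, almostOrthogonal_anti le_rfl (by linarith)
    (mem_almostOrthogonal_of_forall_norm_eq_one (by linarith) hz hsphere), hgz⟩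

lemma DaugavetProperty.mem_closure_convexHull_almostOrthogonal (h : DaugavetProperty X)
    (F : Submodule ℝ X) [FiniteDimensional ℝ F] {θ : ℝ} (hθ : θ < 1) {x : X} (hx : ‖x‖ ≤ 1) :
    x ∈ closure (convexHull ℝ (almostOrthogonal F θ)) := by
  by_contra hmem
  obtain ⟨f, s, hs, hsx⟩ := geometric_hahn_banach_closed_point
    (convex_convexHull ℝ (almostOrthogonal F θ)).closure isClosed_closure hmem
  obtain ⟨z, hz, hsz⟩ := h.exists_mem_almostOrthogonal F hθ (hsx.trans_le (apply_le_opNorm f hx))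
  exact lt_asymm hsz (hs z (subset_closure (subset_convexHull ℝ _ hz)))

lemma DaugavetProperty.exists_countable_mem_closure_convexHull (h : DaugavetProperty X)
    (F : Submodule ℝ X) [FiniteDimensional ℝ F] {x : X} (hx : ‖x‖ ≤ 1) :
    ∃ W : Set X, W.Countable ∧
      ∀ θ < 1, x ∈ closure (convexHull ℝ (W ∩ almostOrthogonal F θ)) := by
  have hθ (m : ℕ) : 1 - 1 / ((m : ℝ) + 1) < 1 := sub_lt_self _ (by positivity)
  choose W hWsub hWc hxW using fun m => exists_countable_subset_mem_closure_convexHull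
    (h.mem_closure_convexHull_almostOrthogonal F (hθ m) hx)
  refine ⟨⋃ m, W m, countable_iUnion hWc, fun θ hθ1 => ?_⟩
  obtain ⟨m, hm⟩ := exists_nat_one_div_lt (sub_pos.2 hθ1)
  refine closure_mono (convexHull_mono ?_) (hxW m)
  exact subset_inter (subset_iUnion W m)
    ((hWsub m).trans (almostOrthogonal_anti le_rfl (by linarith)))

lemma DaugavetProperty.exists_notMem (h : DaugavetProperty X) (F : Submodule ℝ X)
    [FiniteDimensional ℝ F] : ∃ z ∉ F, ‖z‖ ≤ 1 := by
  have := h.nontrivial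
  obtain ⟨g, hg⟩ := exists_ne (0 : X →L[ℝ] ℝ)
  obtain ⟨z, hz, hgz⟩ := h.exists_mem_almostOrthogonal F one_half_lt_one (norm_pos_iff.2 hg)
  refine ⟨z, fun hzF => ?_, hz.1⟩
  have hz0 : z = 0 := by
    have hhalf := hz.2 (-z) (F.neg_mem hzF)
    rw [neg_add_cancel, norm_zero, norm_neg] at hhalf
    exact norm_le_zero_iff.1 (by linarith)
  simp [hz0] at hgz

lemma DaugavetProperty.not_finiteDimensional (h : DaugavetProperty X) :
    ¬ FiniteDimensional ℝ X := fun _ => by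
  obtain ⟨z, hz, -⟩ := h.exists_notMem ⊤
  exact hz Submodule.mem_top

end Daugavet

section SelfReproducing

lemma exists_countable_superset_closed {α : Type*} {S : Set α} (hS : S.Countable)
    {Φ : Set α → Set α} (hΦ : ∀ t, t.Finite → (Φ t).Countable) :
    ∃ N, S ⊆ N ∧ N.Countable ∧ ∀ t ⊆ N, t.Finite → Φ t ⊆ N := by
  let step (T : Set α) : Set α := T ∪ ⋃ t ∈ {t | t.Finite ∧ t ⊆ T}, Φ t
  have hmono : Monotone fun n => step^[n] S := monotone_nat_of_le_succ fun n => by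
    rw [Function.iterate_succ_apply']
    exact subset_union_left
  have hcount (n : ℕ) : (step^[n] S).Countable := by
    induction n with
    | zero => exact hS
    | succ n ih =>
      rw [Function.iterate_succ_apply']
      exact ih.union ((countable_ofPred_finite_subset ih).biUnion fun t ht => hΦ t ht.1)
  refine ⟨⋃ n, step^[n] S, subset_iUnion (fun n => step^[n] S) 0, countable_iUnion hcount,
    fun t htN ht => ?_⟩
  obtain ⟨n, hn⟩ : ∃ n, t ⊆ step^[n] S := by
    lift t to Finset α using ht
    exact Directed.exists_mem_subset_of_finset_subset_biUnion hmono.directed_le htN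
  have htn : t ∈ {t | t.Finite ∧ t ⊆ step^[n] S} := ⟨ht, hn⟩
  calc Φ t ⊆ step (step^[n] S) := (subset_biUnion_of_mem (u := Φ) htn).trans subset_union_right
    _ = step^[n + 1] S := (Function.iterate_succ_apply' step n S).symm
    _ ⊆ ⋃ n, step^[n] S := subset_iUnion (fun n => step^[n] S) (n + 1)

/-- A subset `N` of the unit ball whose points lie in the closed convex hull of those points of `N`
that are almost orthogonal to `F` and to any prescribed finite part of `N`. It replaces the unit
ball of a Daugavet space by a set which can be countable. -/
structure IsSelfReproducing (F : Submodule ℝ X) (N : Set X) : Prop where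
  norm_le_one : ∀ x ∈ N, ‖x‖ ≤ 1
  subset_closure_convexHull : ∀ t ⊆ N, t.Finite → ∀ θ < 1,
    N ⊆ closure (convexHull ℝ (N ∩ almostOrthogonal (F ⊔ Submodule.span ℝ t) θ))

lemma DaugavetProperty.exists_countable_forall_mem_closure_convexHull (h : DaugavetProperty X)
    (F : Submodule ℝ X) [FiniteDimensional ℝ F] {t : Set X} (ht : t.Finite) :
    ∃ W : Set X, W.Countable ∧ ∀ x ∈ t, ‖x‖ ≤ 1 → ∀ θ < 1,
      x ∈ closure (convexHull ℝ (W ∩ almostOrthogonal (F ⊔ Submodule.span ℝ t) θ)) := by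
  have := FiniteDimensional.span_of_finite ℝ ht
  choose! W hWc hW using fun x (hx : ‖x‖ ≤ 1) =>
    h.exists_countable_mem_closure_convexHull (F ⊔ Submodule.span ℝ t) hx
  refine ⟨⋃ x ∈ {x ∈ t | ‖x‖ ≤ 1}, W x,
    (ht.subset (sep_subset _ _)).countable.biUnion fun x hx => hWc x hx.2,
    fun x hxt hx θ hθ => closure_mono (convexHull_mono ?_) (hW x hx θ hθ)⟩
  exact inter_subset_inter_left _ (subset_biUnion_of_mem (u := W) ⟨hxt, hx⟩)

lemma DaugavetProperty.exists_isSelfReproducing (h : DaugavetProperty X) (F : Submodule ℝ X)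
    [FiniteDimensional ℝ F] {z₀ : X} (hz₀ : ‖z₀‖ ≤ 1) :
    ∃ N : Set X, N.Countable ∧ z₀ ∈ N ∧ IsSelfReproducing F N := by
  choose! W hWc hW using fun (t : Set X) (ht : t.Finite) =>
    h.exists_countable_forall_mem_closure_convexHull F ht
  obtain ⟨N, hz₀N, hNc, hN⟩ := exists_countable_superset_closed (countable_singleton z₀) hWc
  refine ⟨{x ∈ N | ‖x‖ ≤ 1}, hNc.mono (sep_subset _ _), ⟨hz₀N rfl, hz₀⟩, fun x hx => hx.2,
    fun t htN ht θ hθ x hx => ?_⟩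
  have hinsert : insert x t ⊆ N := insert_subset hx.1 (htN.trans (sep_subset _ _))
  refine closure_mono (convexHull_mono ?_)
    (hW _ (ht.insert x) x (mem_insert x t) hx.2 θ hθ)
  rintro z ⟨hzW, hz⟩
  exact ⟨⟨hN _ hinsert (ht.insert x) hzW, hz.1⟩,
    almostOrthogonal_anti (sup_le_sup_left (Submodule.span_mono (subset_insert x t)) F) le_rfl hz⟩

end SelfReproducing

section RecurrentSequence

lemma injective_ratCast_add_natCast_mul_sqrt_two :
    Function.Injective fun p : ℕ × ℚ => (p.2 : ℝ) + p.1 * √2 := by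
  rintro ⟨m, q⟩ ⟨n, r⟩ hpq
  replace hpq : (q : ℝ) + m * √2 = r + n * √2 := hpq
  have hmn : m = n := by
    by_contra hne
    have hne' : ((m : ℚ) - n) ≠ 0 := sub_ne_zero.2 (Nat.cast_injective.ne hne)
    apply (irrational_sqrt_two.ratCast_mul hne').ne_rat (r - q)
    push_cast
    linarith
  subst hmn
  simpa using hpq

lemma exists_injective_forall_dense_image {α : Type*} {N : Set α} (hNc : N.Countable)
    (hN : N.Nonempty) :
    ∃ (x : ℕ → α) (a : ℕ → ℝ), (∀ n, x n ∈ N) ∧ Function.Injective a ∧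
      ∀ z ∈ N, Dense (a '' {k | x k = z}) := by
  obtain ⟨ν, rfl⟩ := hNc.exists_eq_range hN
  let φ : ℕ ≃ ℕ × ℚ := (Denumerable.eqv (ℕ × ℚ)).symm
  refine ⟨fun n => ν (φ n).1, fun n => (φ n).2 + (φ n).1 * √2, fun n => mem_range_self _,
    injective_ratCast_add_natCast_mul_sqrt_two.comp φ.injective, ?_⟩
  rintro _ ⟨m, rfl⟩
  have hdense : DenseRange fun q : ℚ => (q : ℝ) + m * √2 :=
    (Homeomorph.addRight (m * √2)).surjective.denseRange.comp Rat.denseRange_cast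
      (Homeomorph.addRight (m * √2)).continuous
  refine hdense.mono ?_
  rintro _ ⟨q, rfl⟩
  exact ⟨φ.symm (m, q), by simp, by simp⟩

/-- A sequence `x` in `N` labelled by distinct real numbers `a n` of absolute value at most `2`, in
which every point of `N` recurs arbitrarily late with labels arbitrarily close to any `a n`. -/
structure IsRecurrent {α : Type*} (N : Set α) (x : ℕ → α) (a : ℕ → ℝ) : Prop where
  mem : ∀ n, x n ∈ N
  injective : Function.Injective a
  abs_le_two : ∀ n, |a n| ≤ 2
  exists_ge : ∀ n, ∀ z ∈ N, ∀ U ∈ nhds (a n), ∃ k ≥ n, x k = z ∧ a k ∈ U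

lemma exists_isRecurrent {α : Type*} {N : Set α} (hNc : N.Countable) (hN : N.Nonempty) :
    ∃ x a, IsRecurrent N x a := by
  obtain ⟨x, a, hxN, hinj, hdense⟩ := exists_injective_forall_dense_image hNc hN
  refine ⟨x, fun n => Real.arctan (a n), hxN, Real.arctan_injective.comp hinj, fun n => ?_,
    fun n z hz U hU => ?_⟩
  · exact (abs_lt.2 ⟨by linarith [Real.neg_pi_div_two_lt_arctan (a n), Real.pi_le_four],
      by linarith [Real.arctan_lt_pi_div_two (a n), Real.pi_le_four]⟩).le
  · have hU' : Real.arctan ⁻¹' U ∈ nhds (a n) := Real.continuous_arctan.continuousAt hU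
    obtain ⟨_, ⟨⟨k, hkz, rfl⟩, hkn⟩, hkU⟩ :=
      ((hdense z hz).sdiff_finite ((finite_Iio n).image a)).inter_nhds_nonempty hU'
    exact ⟨k, not_lt.1 fun hlt => hkn (mem_image_of_mem a hlt), hkz, hkU⟩

end RecurrentSequence

section Slices

lemma bddAbove_image_of_isBounded {A : Set X} (hA : IsBounded A) (f : X →L[ℝ] ℝ) :
    BddAbove (f '' A) :=
  (f.lipschitz.isBounded_image hA).bddAbove

lemma exists_mem_sliceSet_closure_convexHull {S : Set X} (hS : S.Nonempty) (f : X →L[ℝ] ℝ) {ε : ℝ}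
    (hε : 0 < ε) : ∃ y ∈ S, y ∈ sliceSet (closure (convexHull ℝ S)) f ε := by
  have hSsub : S ⊆ closure (convexHull ℝ S) := (subset_convexHull ℝ S).trans subset_closure
  obtain ⟨_, ⟨b, hb, rfl⟩, hfb⟩ :=
    exists_lt_of_lt_csSup ((hS.mono hSsub).image f) (sub_lt_self _ hε)
  obtain ⟨y, hyS, hy⟩ := exists_lt_apply_of_mem_closure_convexHull hb hfb
  exact ⟨y, hyS, hSsub hyS, hy⟩

lemma sliceSet_add_sliceSet_subset {A D : Set X} (hA : IsBounded A) (hD : IsBounded D)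
    (f : X →L[ℝ] ℝ) (ε δ : ℝ) :
    sliceSet A f ε + sliceSet D f δ ⊆ sliceSet (A + D) f (ε + δ) := by
  rintro _ ⟨b, ⟨hbA, hb⟩, d, ⟨hdD, hd⟩, rfl⟩
  refine ⟨add_mem_add hbA hdD, ?_⟩
  have hsup : sSup (f '' (A + D)) = sSup (f '' A) + sSup (f '' D) := by
    rw [Set.image_add, csSup_add ⟨f b, mem_image_of_mem f hbA⟩ (bddAbove_image_of_isBounded hA f)
      ⟨f d, mem_image_of_mem f hdD⟩ (bddAbove_image_of_isBounded hD f)]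
  simp only [hsup, map_add]
  linarith

end Slices

section SharplyExposed

/-- The functional `f` exposes `y` in `S` with linear control: a point of `S` on which `f` is
`δ`-close to `f y` is itself `δ`-close to `y`. This is a quantitative form of strong exposedness,
normalised by scaling `f`. -/
def SharplyExposes (f : X →L[ℝ] ℝ) (S : Set X) (y : X) : Prop :=
  ∀ b ∈ S, dist b y ≤ f y - f b

lemma SharplyExposes.closure_convexHull {f : X →L[ℝ] ℝ} {S : Set X} {y : X}
    (h : SharplyExposes f S y) : SharplyExposes f (closure (convexHull ℝ S)) y := by
  have hconvex : Convex ℝ {b | dist b y + f b ≤ f y} := by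
    simpa using
      ((convexOn_univ_dist y).add (f.toLinearMap.convexOn convex_univ)).convex_le (f y)
  have hclosed : IsClosed {b | dist b y + f b ≤ f y} :=
    isClosed_le (by fun_prop) continuous_const
  have hsub : closure (convexHull ℝ S) ⊆ {b | dist b y + f b ≤ f y} :=
    closure_minimal (convexHull_min (fun b hb => le_sub_iff_add_le.1 (h b hb)) hconvex) hclosed
  exact fun b hb => le_sub_iff_add_le.2 (hsub hb)

lemma exists_sharplyExposes_of_gap {y : ℕ → X} (hy : IsBounded (range y)) {f : X →L[ℝ] ℝ} {n : ℕ}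
    {κ : ℝ} (hκ : 0 < κ) (hgap : ∀ k ≠ n, f (y k) + κ ≤ f (y n)) :
    ∃ g, SharplyExposes g (range y) (y n) := by
  obtain ⟨C, hC⟩ := Metric.isBounded_iff.1 hy
  have hC0 : 0 ≤ C := dist_nonneg.trans (hC (mem_range_self n) (mem_range_self n))
  refine ⟨(C / κ) • f, ?_⟩
  rintro _ ⟨k, rfl⟩
  rcases eq_or_ne k n with rfl | hkn
  · simp
  calc dist (y k) (y n) ≤ C := hC (mem_range_self k) (mem_range_self n)
    _ = C / κ * κ := (div_mul_cancel₀ C hκ.ne').symm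
    _ ≤ C / κ * (f (y n) - f (y k)) := by
        gcongr
        linarith [hgap k hkn]
    _ = ((C / κ) • f) (y n) - ((C / κ) • f) (y k) := by
        simp only [_root_.smul_apply, smul_eq_mul, mul_sub]

lemma SharplyExposes.isGreatest {f : X →L[ℝ] ℝ} {S : Set X} {y : X} (h : SharplyExposes f S y)
    (hy : y ∈ S) : IsGreatest (f '' S) (f y) := by
  refine ⟨mem_image_of_mem f hy, ?_⟩
  rintro _ ⟨b, hb, rfl⟩
  linarith [h b hb, dist_nonneg (x := b) (y := y)]

lemma SharplyExposes.sliceSet_subset_ball {f : X →L[ℝ] ℝ} {S : Set X} {y : X}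
    (h : SharplyExposes f S y) (hy : y ∈ S) (ε : ℝ) : sliceSet S f ε ⊆ Metric.ball y ε := by
  rintro b ⟨hbS, hb⟩
  rw [(h.isGreatest hy).csSup_eq] at hb
  exact (h b hbS).trans_lt (by linarith)

lemma SharplyExposes.isSlice {f : X →L[ℝ] ℝ} {S : Set X} {y : X} (h : SharplyExposes f S y)
    (hy : y ∈ S) (hS : S.Nontrivial) {ε : ℝ} (hε : 0 < ε) : IsSlice S (sliceSet S f ε) := by
  refine ⟨⟨y, hy, ?_⟩, f, ?_, ε, hε, rfl⟩
  · rw [(h.isGreatest hy).csSup_eq]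
    linarith
  · rintro rfl
    obtain ⟨b, hb, hby⟩ := hS.exists_ne y
    exact hby (dist_le_zero.1 (by simpa using h b hb))

theorem isSCD_closure_convexHull_of_sharplyExposes {y : ℕ → X} (hy : (range y).Nontrivial)
    (h : ∀ n, ∃ f, SharplyExposes f (range y) (y n)) :
    IsSCD (closure (convexHull ℝ (range y))) := by
  choose f hf using h
  let A : Set X := closure (convexHull ℝ (range y))
  have hsub : range y ⊆ A := (subset_convexHull ℝ _).trans subset_closure
  have hyA (n : ℕ) : y n ∈ A := hsub (mem_range_self n)
  have hfA (n : ℕ) : SharplyExposes (f n) A (y n) := (hf n).closure_convexHull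
  let V (p : ℕ × ℕ) : Set X := sliceSet A (f p.1) (1 / ((p.2 : ℝ) + 1))
  refine ⟨fun i => V i.unpair, fun i => (hfA _).isSlice (hyA _) (hy.mono hsub) (by positivity),
    fun B hB => ?_⟩
  have hV (p : ℕ × ℕ) : (B ∩ V p).Nonempty := by simpa using hB (Nat.pair p.1 p.2)
  have hyB : range y ⊆ closure B := by
    rintro _ ⟨n, rfl⟩
    refine Metric.mem_closure_iff.2 fun ε hε => ?_
    obtain ⟨m, hm⟩ := exists_nat_one_div_lt hε
    obtain ⟨b, hbB, hbV⟩ := hV (n, m)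
    have hball := (hfA n).sliceSet_subset_ball (hyA n) _ hbV
    exact ⟨b, hbB, (Metric.mem_ball'.1 hball).trans hm⟩
  exact closure_minimal (convexHull_min (hyB.trans (closure_mono (subset_convexHull ℝ B)))
    (convex_convexHull ℝ B).closure) isClosed_closure

-- `2 a_n p - q` exposes `(a_n, a_n²)` on the parabola with gap `(a_k - a_n)²`. This gap can be
-- small only for late `k`, and there the strictly decreasing third coordinate takes over.
lemma exists_sharplyExposes_of_parabola {y : ℕ → X} (hy : IsBounded (range y)) {a w : ℕ → ℝ}
    (ha : Function.Injective a) (hw : StrictAnti w) {p q r : X →L[ℝ] ℝ}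
    (hp : ∀ n, p (y n) = a n) (hq : ∀ n, q (y n) = a n ^ 2) (hr : ∀ n, r (y n) = w n) (n : ℕ) :
    ∃ f, SharplyExposes f (range y) (y n) := by
  obtain ⟨c, hc, hc0⟩ :
      ∃ c : ℝ, (∀ k ∈ Iio n, c * (w k - w (n + 1)) ≤ (a k - a n) ^ 2) ∧ 0 < c := by
    have hlt (k : ℕ) (hk : k ∈ Iio n) :
        ∀ᶠ c in nhdsWithin 0 (Ioi 0), c * (w k - w (n + 1)) ≤ (a k - a n) ^ 2 := by
      have hpos : 0 < (a k - a n) ^ 2 := sq_pos_of_ne_zero (sub_ne_zero.2 (ha.ne hk.ne))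
      have hlim : Filter.Tendsto (fun c : ℝ => c * (w k - w (n + 1))) (nhds 0) (nhds 0) := by
        simpa using (continuous_mul_const (w k - w (n + 1))).tendsto 0
      exact (hlim.mono_left nhdsWithin_le_nhds).eventually_le_const hpos
    exact (((finite_Iio n).eventually_all.2 hlt).and self_mem_nhdsWithin).exists
  have hκ : 0 < c * (w n - w (n + 1)) := mul_pos hc0 (sub_pos.2 (hw n.lt_succ_self))
  refine exists_sharplyExposes_of_gap (f := (2 * a n) • p - q + c • r) hy hκ fun k hkn => ?_
  have hdiff : c * (w k - w (n + 1)) ≤ (a k - a n) ^ 2 := by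
    rcases hkn.lt_or_gt with hlt | hgt
    · exact hc k hlt
    · have hle : w k ≤ w (n + 1) := hw.antitone hgt
      exact (mul_nonpos_of_nonneg_of_nonpos hc0.le (sub_nonpos.2 hle)).trans (sq_nonneg _)
  simp only [_root_.add_apply, _root_.sub_apply, _root_.smul_apply, smul_eq_mul, hp, hq, hr]
  linarith

end SharplyExposed

section Biorthogonal

lemma exists_biorthogonal (hX : ¬ FiniteDimensional ℝ X) (n : ℕ) :
    ∃ (e : Fin n → X) (α : Fin n → X →L[ℝ] ℝ), ∀ i j, α i (e j) = if i = j then 1 else 0 := by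
  have hrank : (n : Cardinal) ≤ Module.rank ℝ X := by
    have : Cardinal.aleph0 ≤ Module.rank ℝ X :=
      not_lt.1 fun hlt => hX (Module.rank_lt_aleph0_iff.1 hlt)
    exact Cardinal.natCast_lt_aleph0.le.trans this
  obtain ⟨e, he⟩ := exists_linearIndependent_of_le_rank hrank
  have hsurj := SeparatingDual.dualMap_surjective_iff.2
    (linearIndependent_iff_injective_fintypeLinearCombination.1 he)
  choose α hα using fun i : Fin n => hsurj (LinearMap.proj i)
  refine ⟨e, α, fun i j => ?_⟩
  simpa [Fintype.linearCombination_apply_single, Pi.single_apply] using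
    LinearMap.congr_fun (hα i) (Pi.single j 1)

lemma exists_projection_of_biorthogonal {ι : Type*} [Finite ι] [DecidableEq ι] {e : ι → X}
    {α : ι → X →L[ℝ] ℝ} (hα : ∀ i j, α i (e j) = if i = j then 1 else 0) :
    ∃ P : X →L[ℝ] X, (∀ i v, α i (P v) = 0) ∧ ∀ v, P v - v ∈ Submodule.span ℝ (range e) := by
  cases nonempty_fintype ι
  refine ⟨.id ℝ X - ∑ i, (α i).smulRight (e i), fun i v => ?_, fun v => ?_⟩
  · simp [hα]
  · have hsum : ∑ i, α i v • e i ∈ Submodule.span ℝ (range e) :=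
      Submodule.sum_mem _ fun i _ => Submodule.smul_mem _ _ (Submodule.subset_span ⟨i, rfl⟩)
    simpa using Submodule.neg_mem _ hsum

end Biorthogonal

section Generators

/-- The point of the parabola `s ↦ s • e 0 + s ^ 2 • e 1` at `s = a n`, translated by `P (x n)` and
lifted by `σ / 2 ^ n` in the direction `e 2`. -/
noncomputable def generator (P : X →L[ℝ] X) (e : Fin 3 → X) (x : ℕ → X) (a : ℕ → ℝ) (σ : ℝ)
    (n : ℕ) : X :=
  P (x n) + (a n • e 0 + a n ^ 2 • e 1 + (σ * (1 / 2) ^ n) • e 2)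

/-- The closed convex hull of the generators with lift `σ`; the two SCD summands are the cases
`σ = 1` and `σ = -1`. -/
def generatorHull (P : X →L[ℝ] X) (e : Fin 3 → X) (x : ℕ → X) (a : ℕ → ℝ) (σ : ℝ) : Set X :=
  closure (convexHull ℝ (range (generator P e x a σ)))

variable {P : X →L[ℝ] X} {e : Fin 3 → X} {x : ℕ → X} {a : ℕ → ℝ} {N : Set X} {σ : ℝ}

lemma generator_mem_generatorHull (n : ℕ) : generator P e x a σ n ∈ generatorHull P e x a σ :=
  subset_closure (subset_convexHull ℝ _ (mem_range_self n))

lemma generator_sub_mem_span (hP : ∀ v, P v - v ∈ Submodule.span ℝ (range e)) (n : ℕ) :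
    generator P e x a σ n - x n ∈ Submodule.span ℝ (range e) := by
  have he (i : Fin 3) (c : ℝ) : c • e i ∈ Submodule.span ℝ (range e) :=
    Submodule.smul_mem _ c (Submodule.subset_span (mem_range_self i))
  rw [generator, add_sub_right_comm]
  exact add_mem (hP _) (add_mem (add_mem (he 0 _) (he 1 _)) (he 2 _))

lemma apply_generator {α : Fin 3 → X →L[ℝ] ℝ} (hα : ∀ i j, α i (e j) = if i = j then 1 else 0)
    (hαP : ∀ i v, α i (P v) = 0) (i : Fin 3) (n : ℕ) :
    α i (generator P e x a σ n) = ![a n, a n ^ 2, σ * (1 / 2) ^ n] i := by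
  fin_cases i <;> simp [generator, hα, hαP]

lemma IsRecurrent.isBounded_range_generator (hrec : IsRecurrent N x a) (hN : IsBounded N) :
    IsBounded (range (generator P e x a σ)) := by
  obtain ⟨C, hC⟩ := hN.exists_norm_le
  refine isBounded_iff_forall_norm_le.2
    ⟨‖P‖ * C + (2 * ‖e 0‖ + 2 ^ 2 * ‖e 1‖ + |σ| * ‖e 2‖), ?_⟩
  rintro _ ⟨n, rfl⟩
  have hx : ‖P (x n)‖ ≤ ‖P‖ * C := P.le_opNorm_of_le (hC _ (hrec.mem n))
  have h0 : ‖a n • e 0‖ ≤ 2 * ‖e 0‖ := by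
    rw [norm_smul]
    gcongr
    exact hrec.abs_le_two n
  have h1 : ‖a n ^ 2 • e 1‖ ≤ 2 ^ 2 * ‖e 1‖ := by
    rw [norm_smul, norm_pow]
    gcongr
    exact hrec.abs_le_two n
  have h2 : ‖(σ * (1 / 2) ^ n) • e 2‖ ≤ |σ| * ‖e 2‖ := by
    rw [norm_smul, norm_mul, Real.norm_eq_abs]
    gcongr
    refine mul_le_of_le_one_right (abs_nonneg σ) ?_
    rw [norm_pow]
    exact pow_le_one₀ (norm_nonneg _) (by norm_num)
  exact norm_add_le_of_le hx (norm_add_le_of_le (norm_add_le_of_le h0 h1) h2)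

lemma IsRecurrent.isBounded_generatorHull (hrec : IsRecurrent N x a) (hN : IsBounded N) :
    IsBounded (generatorHull P e x a σ) :=
  (isBounded_convexHull.2 (hrec.isBounded_range_generator hN)).closure

lemma IsRecurrent.isSCD_generatorHull (hrec : IsRecurrent N x a) (hN : IsBounded N)
    {α : Fin 3 → X →L[ℝ] ℝ} (hα : ∀ i j, α i (e j) = if i = j then 1 else 0)
    (hαP : ∀ i v, α i (P v) = 0) (hσ : σ ≠ 0) :
    IsSCD (generatorHull P e x a σ) := by
  have h0 (n : ℕ) : α 0 (generator P e x a σ n) = a n := apply_generator hα hαP 0 n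
  have h1 (n : ℕ) : α 1 (generator P e x a σ n) = a n ^ 2 := apply_generator hα hαP 1 n
  have h2 (n : ℕ) : (σ⁻¹ • α 2) (generator P e x a σ n) = (1 / 2) ^ n := by
    simp [apply_generator hα hαP, hσ]
  have hinj : Function.Injective (generator P e x a σ) :=
    .of_comp (f := α 0) (by simpa only [Function.comp_def, h0] using hrec.injective)
  refine isSCD_closure_convexHull_of_sharplyExposes
    ⟨_, mem_range_self 0, _, mem_range_self 1, hinj.ne zero_ne_one⟩ ?_
  exact exists_sharplyExposes_of_parabola (hrec.isBounded_range_generator hN) hrec.injective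
    (pow_right_strictAnti₀ one_half_pos one_half_lt_one) h0 h1 h2

-- Passing to a later index with a nearby label hardly changes the parabola part and does not lower
-- `f` on the lift, so `x n` may be replaced by any point of `Z` on which `f ∘ P` is large enough.
lemma IsRecurrent.exists_generator_mem_sliceSet (hrec : IsRecurrent N x a) {Z : Set X} (hZN : Z ⊆ N)
    (hNZ : N ⊆ closure (convexHull ℝ Z)) {f : X →L[ℝ] ℝ} (hσf : σ * f (e 2) ≤ 0) {ε : ℝ}
    (hε : 0 < ε) :
    ∃ k, x k ∈ Z ∧ generator P e x a σ k ∈ sliceSet (generatorHull P e x a σ) f ε := by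
  have hf (k : ℕ) : f (generator P e x a σ k) =
      f (P (x k)) + (a k * f (e 0) + a k ^ 2 * f (e 1)) + (1 / 2) ^ k * (σ * f (e 2)) := by
    simp only [generator, map_add, map_smul, smul_eq_mul]
    ring
  obtain ⟨_, ⟨n, rfl⟩, -, hn⟩ := exists_mem_sliceSet_closure_convexHull
    (range_nonempty (generator P e x a σ)) f hε
  set c := sSup (f '' generatorHull P e x a σ) - ε with hc
  replace hn : c < f (generator P e x a σ n) := hn
  rw [hf] at hn
  obtain ⟨z, hzZ, hz⟩ : ∃ z ∈ Z, c - (a n * f (e 0) + a n ^ 2 * f (e 1)) -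
      (1 / 2) ^ n * (σ * f (e 2)) < (f.comp P) z :=
    exists_lt_apply_of_mem_closure_convexHull (hNZ (hrec.mem n))
      (by rw [ContinuousLinearMap.comp_apply]; linarith)
  rw [ContinuousLinearMap.comp_apply] at hz
  have hnhds : {s | c - f (P z) - (1 / 2) ^ n * (σ * f (e 2)) < s * f (e 0) + s ^ 2 * f (e 1)} ∈
      nhds (a n) :=
    (isOpen_lt continuous_const (by fun_prop)).mem_nhds
      (show _ < a n * f (e 0) + a n ^ 2 * f (e 1) by linarith)
  obtain ⟨k, hnk, rfl, hk⟩ := hrec.exists_ge n z (hZN hzZ) _ hnhds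
  refine ⟨k, hzZ, generator_mem_generatorHull k, ?_⟩
  have hlift : (1 / 2) ^ n * (σ * f (e 2)) ≤ (1 / 2) ^ k * (σ * f (e 2)) :=
    mul_le_mul_of_nonpos_right
      (pow_le_pow_of_le_one (by norm_num) (by norm_num) hnk) hσf
  rw [← hc, hf]
  rw [mem_ofPred_eq] at hk
  linarith

lemma IsRecurrent.exists_mem_sliceSet_add_of_mul_nonpos (hrec : IsRecurrent N x a)
    (hN : IsBounded N) (hP : ∀ v, P v - v ∈ Submodule.span ℝ (range e)) {Z : Set X} (hZN : Z ⊆ N)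
    (hNZ : N ⊆ closure (convexHull ℝ Z)) {f : X →L[ℝ] ℝ} (hσf : σ * f (e 2) ≤ 0) {ε : ℝ}
    (hε : 0 < ε) :
    ∃ z ∈ Z, ∃ w ∈ N, ∃ b ∈ sliceSet (generatorHull P e x a σ + generatorHull P e x a (-σ)) f ε,
      b - (z + w) ∈ Submodule.span ℝ (range e) := by
  obtain ⟨k, hkZ, hk⟩ := hrec.exists_generator_mem_sliceSet (P := P) hZN hNZ hσf (half_pos hε)
  obtain ⟨_, ⟨l, rfl⟩, hl⟩ := exists_mem_sliceSet_closure_convexHull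
    (range_nonempty (generator P e x a (-σ))) f (half_pos hε)
  have hsum := sliceSet_add_sliceSet_subset (hrec.isBounded_generatorHull hN)
    (hrec.isBounded_generatorHull hN) f (ε / 2) (ε / 2) (add_mem_add hk hl)
  rw [add_halves] at hsum
  refine ⟨x k, hkZ, x l, hrec.mem l, _, hsum, ?_⟩
  rw [add_sub_add_comm]
  exact add_mem (generator_sub_mem_span hP k) (generator_sub_mem_span hP l)

lemma IsRecurrent.exists_mem_sliceSet_add (hrec : IsRecurrent N x a) (hN : IsBounded N)
    (hP : ∀ v, P v - v ∈ Submodule.span ℝ (range e)) {Z : Set X} (hZN : Z ⊆ N)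
    (hNZ : N ⊆ closure (convexHull ℝ Z)) (f : X →L[ℝ] ℝ) {ε : ℝ} (hε : 0 < ε) :
    ∃ z ∈ Z, ∃ w ∈ N, ∃ b ∈ sliceSet (generatorHull P e x a σ + generatorHull P e x a (-σ)) f ε,
      b - (z + w) ∈ Submodule.span ℝ (range e) := by
  rcases le_total (σ * f (e 2)) 0 with hσf | hσf
  · exact hrec.exists_mem_sliceSet_add_of_mul_nonpos hN hP hZN hNZ hσf hε
  · have := hrec.exists_mem_sliceSet_add_of_mul_nonpos (σ := -σ) hN hP hZN hNZ
      (by simpa using hσf) hε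
    rwa [neg_neg, add_comm (generatorHull P e x a (-σ))] at this

lemma IsRecurrent.exists_mem_add_sub_mem_span (hrec : IsRecurrent N x a)
    (hP : ∀ v, P v - v ∈ Submodule.span ℝ (range e)) {v : X} (hv : v ∈ N) (σ τ : ℝ) :
    ∃ b ∈ generatorHull P e x a σ + generatorHull P e x a τ,
      b - (v + v) ∈ Submodule.span ℝ (range e) := by
  obtain ⟨k, -, rfl, -⟩ := hrec.exists_ge 0 v hv univ Filter.univ_mem
  refine ⟨_, add_mem_add (generator_mem_generatorHull k) (generator_mem_generatorHull k), ?_⟩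
  rw [add_sub_add_comm]
  exact add_mem (generator_sub_mem_span hP k) (generator_sub_mem_span hP k)

end Generators

section AlmostOrthogonalSequence

lemma exists_seq_forall_image_Iio {α : Type*} {N : Set α} {p : ℕ → Set α → α → Prop}
    (h : ∀ n, ∀ t ⊆ N, t.Finite → ∃ z ∈ N, p n t z) :
    ∃ z : ℕ → α, ∀ n, z n ∈ N ∧ p n (z '' Iio n) (z n) := by
  have : Nonempty α := (h 0 ∅ (empty_subset N) finite_empty).nonempty
  choose! g hgN hg using h
  let z : ℕ → α :=
    wellFounded_lt.fix fun n ih => g n (range fun k : Iio n => ih k k.2)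
  have hz (n : ℕ) : z n = g n (z '' Iio n) := by
    rw [image_eq_range]
    exact wellFounded_lt.fix_eq _ n
  have hzN (n : ℕ) : z n ∈ N := by
    induction n using Nat.strong_induction_on with
    | _ n ih => exact hz n ▸ hgN n _ (image_subset_iff.2 ih) ((finite_Iio n).image z)
  refine ⟨z, fun n => ⟨hzN n, ?_⟩⟩
  conv => rhs; rw [hz n]
  exact hg n _ (image_subset_iff.2 fun k _ => hzN k) ((finite_Iio n).image z)

lemma mul_norm_le_mul_norm_add_of_mem_span_image {E : Submodule ℝ X} {z : ℕ → X} {c : ℕ → ℝ}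
    (hc : ∀ n, 0 < c n) (hanti : Antitone c)
    (hz : ∀ n, z n ∈ almostOrthogonal (E ⊔ Submodule.span ℝ (z '' Iio n)) (c (n + 1) / c n))
    {u : X} (hu : u ∈ E) (n : ℕ) {v : X} (hv : v ∈ Submodule.span ℝ (z '' Iio n)) :
    c n * ‖u‖ ≤ c 0 * ‖u + v‖ := by
  induction n generalizing v with
  | zero =>
    obtain rfl : v = 0 := by simpa using hv
    simp
  | succ n ih =>
    rw [← Order.succ_eq_add_one, Order.Iio_succ_eq_insert, image_insert_eq] at hv
    obtain ⟨l, v', hv', rfl⟩ := Submodule.mem_span_insert.1 hv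
    have hstep : c (n + 1) / c n * ‖u + v'‖ ≤ ‖u + v' + l • z n‖ :=
      mul_norm_le_norm_add_smul ((div_le_one (hc n)).2 (hanti n.le_succ)) (hz n)
        (Submodule.add_mem_sup hu hv') l
    calc c (n + 1) * ‖u‖ = c (n + 1) / c n * (c n * ‖u‖) := by
          rw [← mul_assoc, div_mul_cancel₀ _ (hc n).ne']
      _ ≤ c (n + 1) / c n * (c 0 * ‖u + v'‖) :=
          mul_le_mul_of_nonneg_left (ih hv') (div_nonneg (hc _).le (hc n).le)
      _ = c 0 * (c (n + 1) / c n * ‖u + v'‖) := mul_left_comm _ _ _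
      _ ≤ c 0 * ‖u + v' + l • z n‖ := mul_le_mul_of_nonneg_left hstep (hc 0).le
      _ = c 0 * ‖u + (l • z n + v')‖ := by rw [add_assoc, add_comm v']

lemma norm_le_mul_norm_add_of_mem_span_range {E : Submodule ℝ X} {z : ℕ → X} {c : ℕ → ℝ}
    (hc : ∀ n, 1 ≤ c n) (hanti : Antitone c)
    (hz : ∀ n, z n ∈ almostOrthogonal (E ⊔ Submodule.span ℝ (z '' Iio n)) (c (n + 1) / c n))
    {u : X} (hu : u ∈ E) {v : X} (hv : v ∈ Submodule.span ℝ (range z)) :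
    ‖u‖ ≤ c 0 * ‖u + v‖ := by
  have hmono : Monotone fun n => Submodule.span ℝ (z '' Iio n) := fun m n hmn =>
    Submodule.span_mono (image_mono (Iio_subset_Iio hmn))
  have hrange : range z = ⋃ n, z '' Iio n := by rw [← image_iUnion, iUnion_Iio, image_univ]
  rw [hrange, Submodule.span_iUnion, Submodule.mem_iSup_of_directed _ hmono.directed_le] at hv
  obtain ⟨n, hvn⟩ := hv
  calc ‖u‖ ≤ c n * ‖u‖ := le_mul_of_one_le_left (norm_nonneg u) (hc n)
    _ ≤ c 0 * ‖u + v‖ := mul_norm_le_mul_norm_add_of_mem_span_image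
        (fun n => zero_lt_one.trans_le (hc n)) hanti hz hu n hvn

lemma exists_functional_eq_one_vanishing_sup {F E G : Submodule ℝ X} [FiniteDimensional ℝ F]
    (hFE : F ≤ E) {C : ℝ} (hC : ∀ u ∈ E, ∀ v ∈ G, ‖u‖ ≤ C * ‖u + v‖) {z₀ : X} (hz₀E : z₀ ∈ E)
    (hz₀F : z₀ ∉ F) :
    ∃ φ : X →L[ℝ] ℝ, φ z₀ = 1 ∧ ∀ v ∈ F ⊔ G, φ v = 0 := by
  let H : Submodule ℝ X := (F ⊔ G).topologicalClosure
  have hdist : 0 < Metric.infDist z₀ F :=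
    (F.closed_of_finiteDimensional.notMem_iff_infDist_pos F.nonempty).1 hz₀F
  have hsub : (H : Set X) ⊆ {v | Metric.infDist z₀ F ≤ C * ‖z₀ - v‖} := by
    refine closure_minimal (fun v hv => ?_) (isClosed_le continuous_const (by fun_prop))
    obtain ⟨u, hu, w, hw, rfl⟩ := Submodule.mem_sup.1 hv
    calc Metric.infDist z₀ F ≤ ‖z₀ - u‖ := by
          rw [← dist_eq_norm]; exact Metric.infDist_le_dist_of_mem hu
      _ ≤ C * ‖z₀ - u + -w‖ := hC _ (E.sub_mem hz₀E (hFE hu)) _ (G.neg_mem hw)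
      _ = C * ‖z₀ - (u + w)‖ := by rw [sub_add_eq_sub_sub, sub_eq_add_neg (z₀ - u)]
  have hz₀H : z₀ ∉ H := fun hmem => hdist.not_ge (by simpa using hsub hmem)
  have : IsClosed (H : Set X) := Submodule.isClosed_topologicalClosure _
  obtain ⟨ψ, hψ⟩ := SeparatingDual.exists_eq_one (R := ℝ)
    (mt (Submodule.Quotient.mk_eq_zero H).1 hz₀H)
  refine ⟨ψ.comp H.mkQL, hψ, fun v hv => ?_⟩
  have hvH : H.mkQL v = 0 :=
    (Submodule.Quotient.mk_eq_zero H).2 (Submodule.le_topologicalClosure _ hv)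
  rw [ContinuousLinearMap.comp_apply, hvH, map_zero]

lemma exists_seq_functional_eq_one_vanishing {F E : Submodule ℝ X} [FiniteDimensional ℝ F]
    (hFE : F ≤ E) {z₀ : X} (hz₀E : z₀ ∈ E) (hz₀F : z₀ ∉ F) {N : Set X} {p : ℕ → X → Prop}
    (h : ∀ n, ∀ t ⊆ N, t.Finite → ∀ θ < 1,
      ∃ z ∈ N ∩ almostOrthogonal (E ⊔ Submodule.span ℝ t) θ, p n z) :
    ∃ (z : ℕ → X) (φ : X →L[ℝ] ℝ),
      (∀ n, p n (z n)) ∧ φ z₀ = 1 ∧ (∀ u ∈ F, φ u = 0) ∧ ∀ n, φ (z n) = 0 := by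
  let c (n : ℕ) : ℝ := 1 + (1 / 2) ^ n
  have hc1 (n : ℕ) : 1 ≤ c n := le_add_of_nonneg_right (by positivity)
  have hanti : StrictAnti c :=
    (pow_right_strictAnti₀ one_half_pos one_half_lt_one).const_add 1
  have hθ (n : ℕ) : c (n + 1) / c n < 1 :=
    (div_lt_one (zero_lt_one.trans_le (hc1 n))).2 (hanti n.lt_succ_self)
  obtain ⟨z, hz⟩ := exists_seq_forall_image_Iio (N := N)
    (p := fun n t z =>
      z ∈ almostOrthogonal (E ⊔ Submodule.span ℝ t) (c (n + 1) / c n) ∧ p n z)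
    fun n t htN ht => by
      obtain ⟨z, ⟨hzN, hz⟩, hpz⟩ := h n t htN ht _ (hθ n)
      exact ⟨z, hzN, hz, hpz⟩
  obtain ⟨φ, hφ, hφ0⟩ := exists_functional_eq_one_vanishing_sup hFE
    (fun u hu v hv => norm_le_mul_norm_add_of_mem_span_range hc1 hanti.antitone
      (fun n => (hz n).2.1) hu hv) hz₀E hz₀F
  exact ⟨z, φ, fun n => (hz n).2.2, hφ, fun u hu => hφ0 u (Submodule.mem_sup_left hu),
    fun n => hφ0 _ (Submodule.mem_sup_right (Submodule.subset_span (mem_range_self n)))⟩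

end AlmostOrthogonalSequence

section NotSCD

theorem not_isSCD_of_forall_isSlice {F E : Submodule ℝ X} [FiniteDimensional ℝ F] (hFE : F ≤ E)
    {z₀ : X} (hz₀E : z₀ ∈ E) (hz₀F : z₀ ∉ F) {N C : Set X} (hz₀N : z₀ ∈ N) (hN : IsBounded N)
    (hslice : ∀ V, IsSlice C V → ∀ t ⊆ N, t.Finite → ∀ θ < 1,
      ∃ z ∈ N ∩ almostOrthogonal (E ⊔ Submodule.span ℝ t) θ, ∃ w ∈ N, ∃ b ∈ V, b - (z + w) ∈ F)
    (hdouble : ∀ v ∈ N, ∃ b ∈ C, b - (v + v) ∈ F) :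
    ¬ IsSCD C := by
  rintro ⟨V, hV, hdet⟩
  obtain ⟨z, φ, hzV, hφz₀, hφF, hφz⟩ :=
    exists_seq_functional_eq_one_vanishing hFE hz₀E hz₀F fun n => hslice (V n) (hV n)
  choose w hwN b hbV hb using hzV
  have hφ_eq {y v : X} (hyv : y - v ∈ F) : φ y = φ v :=
    sub_eq_zero.1 (by rw [← map_sub, hφF _ hyv])
  let s : ℝ := sSup (φ '' N)
  have hφs {v : X} (hv : v ∈ N) : φ v ≤ s :=
    le_csSup (bddAbove_image_of_isBounded hN φ) (mem_image_of_mem φ hv)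
  have hs : 0 < s := zero_lt_one.trans_le (hφz₀ ▸ hφs hz₀N)
  obtain ⟨_, ⟨v, hvN, rfl⟩, hv⟩ :=
    exists_lt_of_lt_csSup ⟨φ z₀, mem_image_of_mem φ hz₀N⟩ (half_lt_self hs)
  obtain ⟨d, hdC, hd⟩ := hdouble v hvN
  have hdhull : d ∈ closure (convexHull ℝ (range b)) :=
    hdet (range b) (fun n => ⟨b n, mem_range_self n, hbV n⟩) hdC
  obtain ⟨_, ⟨n, rfl⟩, hn⟩ := exists_lt_apply_of_mem_closure_convexHull hdhull
    (show s < φ d by rw [hφ_eq hd, map_add]; linarith)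
  refine hn.not_ge ?_
  calc φ (b n) = φ (w n) := by rw [hφ_eq (hb n), map_add, hφz, zero_add]
    _ ≤ s := hφs (hwN n)

end NotSCD

theorem exists_scd_sets_sum_not_scd_general
    {X : Type*} [NormedAddCommGroup X] [NormedSpace ℝ X]
    (h : DaugavetProperty X) :
    ∃ A D : Set X,
      Convex ℝ A ∧ IsClosed A ∧ IsBounded A ∧ IsSCD A ∧
      Convex ℝ D ∧ IsClosed D ∧ IsBounded D ∧ IsSCD D ∧
      ¬ IsSCD (A + D) := by
  obtain ⟨e, α, hα⟩ := exists_biorthogonal h.not_finiteDimensional 3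
  obtain ⟨P, hαP, hP⟩ := exists_projection_of_biorthogonal hα
  let F : Submodule ℝ X := Submodule.span ℝ (range e)
  have : FiniteDimensional ℝ F := FiniteDimensional.span_of_finite ℝ (finite_range e)
  obtain ⟨z₀, hz₀F, hz₀⟩ := h.exists_notMem F
  let E : Submodule ℝ X := F ⊔ Submodule.span ℝ {z₀}
  have hz₀E : z₀ ∈ E := Submodule.mem_sup_right (Submodule.mem_span_singleton_self z₀)
  obtain ⟨N, hNc, hz₀N, hN⟩ := h.exists_isSelfReproducing E hz₀
  have hNb : IsBounded N := isBounded_iff_forall_norm_le.2 ⟨1, hN.norm_le_one⟩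
  obtain ⟨x, a, hrec⟩ := exists_isRecurrent hNc ⟨z₀, hz₀N⟩
  refine ⟨generatorHull P e x a 1, generatorHull P e x a (-1),
    (convex_convexHull ℝ _).closure, isClosed_closure, hrec.isBounded_generatorHull hNb,
    hrec.isSCD_generatorHull hNb hα hαP one_ne_zero,
    (convex_convexHull ℝ _).closure, isClosed_closure, hrec.isBounded_generatorHull hNb,
    hrec.isSCD_generatorHull hNb hα hαP (neg_ne_zero.2 one_ne_zero), ?_⟩
  refine not_isSCD_of_forall_isSlice le_sup_left hz₀E hz₀F hz₀N hNb ?_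
    fun v hv => hrec.exists_mem_add_sub_mem_span hP hv 1 (-1)
  rintro _ ⟨-, f, -, ε, hε, rfl⟩ t htN ht θ hθ
  exact hrec.exists_mem_sliceSet_add hNb hP inter_subset_left
    (hN.subset_closure_convexHull t htN ht θ hθ) f hε

theorem exists_scd_sets_sum_not_scd
    {X : Type*} [NormedAddCommGroup X] [NormedSpace ℝ X] [CompleteSpace X]
    (h : DaugavetProperty X) :
    ∃ A D : Set X,
      Convex ℝ A ∧ IsClosed A ∧ IsBounded A ∧ IsSCD A ∧
      Convex ℝ D ∧ IsClosed D ∧ IsBounded D ∧ IsSCD D ∧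
      ¬ IsSCD (A + D) :=
  exists_scd_sets_sum_not_scd_general h
end

section
/- Let X be a real Banach space and let U, V ⊂ X be nonempty bounded sets. Suppose there exist a nonzero continuous linear functional x₀* on X, a real number c, and ε₀ > 0 such that U ⊂ {x ∈ X : x₀*(x) = c} and V ⊂ {x ∈ X : x₀*(x) < c − ε₀}. If U ∪ V is SCD, then U is SCD. -/
open Bornology Set Pointwise

variable {X : Type*} [NormedAddCommGroup X] [NormedSpace ℝ X]

/-!
Intersecting the slices of a determining sequence for `U ∪ V` with `U` gives slices of `U`, once the
empty intersections are discarded. If `B ⊆ U` meets all of these, then `B ∪ V` meets every slice of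
the original sequence, so `U` lies in the closed convex hull of `B ∪ V`. The set `V` can be removed
from this hull: as `V` is bounded and `x₀ ≤ c - ε₀` on it, for large `K` the continuous convex
function `y ↦ dist(y, conv B) + K * x₀ y` is at most `K * c` on `B ∪ V`, hence on its closed convex
hull, and at the points of `U`, where `x₀ = c`, the distance must therefore vanish.
-/

theorem le_of_mem_closure_convexHull {E : Type*} [AddCommGroup E] [Module ℝ E] [TopologicalSpace E]
    {s : Set E} {g : E → ℝ} {r : ℝ} (hg : ConvexOn ℝ univ g) (hgc : Continuous g)
    (hs : ∀ x ∈ s, g x ≤ r) {x : E} (hx : x ∈ closure (convexHull ℝ s)) : g x ≤ r := by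
  have hconvex : Convex ℝ {x | g x ≤ r} := by simpa only [sep_univ] using hg.convex_le r
  exact closure_minimal (convexHull_min hs hconvex) (isClosed_le hgc continuous_const) hx

section ConvexHull

variable {E : Type*} [SeminormedAddCommGroup E] [NormedSpace ℝ E]

theorem convexOn_infDist {s : Set E} (hs : Convex ℝ s) :
    ConvexOn ℝ univ fun x ↦ Metric.infDist x s := by
  rcases s.eq_empty_or_nonempty with rfl | hne
  · simpa only [Metric.infDist_empty] using convexOn_const (0 : ℝ) convex_univ
  refine ⟨convex_univ, fun x _ y _ a b ha hb hab ↦ le_of_forall_pos_le_add fun δ hδ ↦ ?_⟩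
  obtain ⟨p, hps, hxp⟩ :=
    (Metric.infDist_lt_iff hne).1 (lt_add_of_pos_right (Metric.infDist x s) hδ)
  obtain ⟨q, hqs, hyq⟩ :=
    (Metric.infDist_lt_iff hne).1 (lt_add_of_pos_right (Metric.infDist y s) hδ)
  calc Metric.infDist (a • x + b • y) s
      ≤ dist (a • x + b • y) (a • p + b • q) :=
        Metric.infDist_le_dist_of_mem (hs hps hqs ha hb hab)
    _ ≤ dist (a • x) (a • p) + dist (b • y) (b • q) := dist_add_add_le _ _ _ _
    _ = a * dist x p + b * dist y q := by
        rw [dist_smul₀, dist_smul₀, Real.norm_of_nonneg ha, Real.norm_of_nonneg hb]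
    _ ≤ a * (Metric.infDist x s + δ) + b * (Metric.infDist y s + δ) := by gcongr
    _ = a • Metric.infDist x s + b • Metric.infDist y s + (a + b) * δ := by
        simp only [smul_eq_mul]; ring
    _ = a • Metric.infDist x s + b • Metric.infDist y s + δ := by rw [hab, one_mul]

theorem mem_closure_convexHull_of_mem_closure_convexHull_union {s t : Set E} {f : E →L[ℝ] ℝ}
    {c ε : ℝ} (hε : 0 < ε) (hs : ∀ x ∈ s, f x ≤ c) (ht : ∀ x ∈ t, f x ≤ c - ε)
    (htb : IsBounded t) {x : E} (hx : x ∈ closure (convexHull ℝ (s ∪ t))) (hcx : c ≤ f x) :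
    x ∈ closure (convexHull ℝ s) := by
  rcases s.eq_empty_or_nonempty with rfl | ⟨b, hb⟩
  · rw [empty_union] at hx
    have hfx : f x ≤ c - ε :=
      le_of_mem_closure_convexHull (f.toLinearMap.convexOn convex_univ) f.continuous ht hx
    linarith
  have hb' : b ∈ convexHull ℝ s := subset_convexHull ℝ s hb
  obtain ⟨M, hM, htM⟩ := htb.subset_closedBall_lt 0 b
  let g : E → ℝ := fun y ↦ Metric.infDist y (convexHull ℝ s) + M / ε * f y
  have hg : ConvexOn ℝ univ g :=
    (convexOn_infDist (convex_convexHull ℝ s)).add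
      (((M / ε) • f).toLinearMap.convexOn convex_univ)
  have hgc : Continuous g := (Metric.continuous_infDist_pt _).add (by fun_prop)
  have hunion : ∀ y ∈ s ∪ t, g y ≤ M / ε * c := by
    rintro y (hy | hy)
    · calc g y = M / ε * f y := by
            simp only [g, Metric.infDist_zero_of_mem (subset_convexHull ℝ s hy), zero_add]
        _ ≤ M / ε * c := by gcongr; exact hs y hy
    · have hyM : Metric.infDist y (convexHull ℝ s) ≤ M :=
        (Metric.infDist_le_dist_of_mem hb').trans (htM hy)
      calc g y ≤ M + M / ε * (c - ε) := by dsimp only [g]; gcongr; exact ht y hy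
        _ = M / ε * c := by field_simp; ring
  have hgx : g x ≤ M / ε * c := le_of_mem_closure_convexHull hg hgc hunion hx
  have hcx' : M / ε * c ≤ M / ε * f x := by gcongr
  have hdist : Metric.infDist x (convexHull ℝ s) ≤ 0 := by linarith
  exact (Metric.mem_closure_iff_infDist_zero ⟨b, hb'⟩).2 (hdist.antisymm Metric.infDist_nonneg)

end ConvexHull

theorem inter_sliceSet {U A : Set X} (hUA : U ⊆ A) (f : X →L[ℝ] ℝ) (ε : ℝ) :
    U ∩ sliceSet A f ε = sliceSet U f (sSup (f '' U) - (sSup (f '' A) - ε)) := by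
  ext x
  simp only [sliceSet, mem_inter_iff, mem_ofPred_eq, sub_sub_cancel]
  exact ⟨fun ⟨hxU, _, hx⟩ ↦ ⟨hxU, hx⟩, fun ⟨hxU, hx⟩ ↦ ⟨hxU, hUA hxU, hx⟩⟩

theorem IsSlice.subset {A S : Set X} (hS : IsSlice A S) : S ⊆ A := by
  obtain ⟨-, f, -, ε, -, rfl⟩ := hS
  exact sep_subset A _

theorem IsSlice.inter_of_subset {U A S : Set X} (hS : IsSlice A S) (hUA : U ⊆ A)
    (hUb : IsBounded U) (hne : (U ∩ S).Nonempty) : IsSlice U (U ∩ S) := by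
  obtain ⟨-, f, hf, ε, -, rfl⟩ := hS
  refine ⟨hne, f, hf, _, ?_, inter_sliceSet hUA f ε⟩
  obtain ⟨x, hxU, -, hx⟩ := hne
  have hbdd : BddAbove (f '' U) := (f.lipschitz.isBounded_image hUb).bddAbove
  exact sub_pos.2 (hx.trans_le (le_csSup hbdd (mem_image_of_mem f hxU)))

theorem IsSCD.of_union {U V : Set X} (hUV : IsSCD (U ∪ V)) (hU : U.Nonempty) (hUb : IsBounded U)
    (hremove : ∀ B ⊆ U, U ⊆ closure (convexHull ℝ (B ∪ V)) → U ⊆ closure (convexHull ℝ B)) :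
    IsSCD U := by
  obtain ⟨S, hS, hdet⟩ := hUV
  have subset_hull_of_meets (B : Set X) (hBU : B ⊆ U)
      (hB : ∀ n, (U ∩ S n).Nonempty → (B ∩ S n).Nonempty) :
      U ⊆ closure (convexHull ℝ B) := by
    refine hremove B hBU (subset_union_left.trans (hdet (B ∪ V) fun n ↦ ?_))
    obtain ⟨y, hy⟩ := (hS n).1
    rcases (hS n).subset hy with hyU | hyV
    · exact (hB n ⟨y, hyU, hy⟩).mono (inter_subset_inter_left _ subset_union_left)
    · exact ⟨y, Or.inr hyV, hy⟩
  have exists_meets : {n | (U ∩ S n).Nonempty}.Nonempty := by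
    by_contra hnone
    have hUempty : U ⊆ closure (convexHull ℝ ∅) :=
      subset_hull_of_meets ∅ (empty_subset U) fun n hn ↦ (hnone ⟨n, hn⟩).elim
    rw [convexHull_empty, closure_empty] at hUempty
    exact hU.not_subset_empty hUempty
  obtain ⟨e, he⟩ := (to_countable {n | (U ∩ S n).Nonempty}).exists_eq_range exists_meets
  refine ⟨fun k ↦ U ∩ S (e k), fun k ↦ ?_, fun B hB ↦ ?_⟩
  · have hk : e k ∈ {n | (U ∩ S n).Nonempty} := he ▸ mem_range_self k
    exact (hS (e k)).inter_of_subset subset_union_left hUb hk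
  · refine (subset_hull_of_meets (B ∩ U) inter_subset_right fun n hn ↦ ?_).trans
      (closure_mono (convexHull_mono inter_subset_left))
    obtain ⟨k, rfl⟩ : n ∈ range e := he ▸ hn
    rw [inter_assoc]
    exact hB k

theorem isSCD_of_union_isSCD_hyperplane_general {U V : Set X} (hU : U.Nonempty)
    (hUb : IsBounded U) (hVb : IsBounded V) {x₀ : X →L[ℝ] ℝ} {c ε₀ : ℝ} (hε₀ : 0 < ε₀)
    (hUH : ∀ x ∈ U, x₀ x = c) (hVH : ∀ x ∈ V, x₀ x ≤ c - ε₀) (hUV : IsSCD (U ∪ V)) :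
    IsSCD U :=
  hUV.of_union hU hUb fun _ hBU hsub u hu ↦
    mem_closure_convexHull_of_mem_closure_convexHull_union hε₀
      (fun x hx ↦ (hUH x (hBU hx)).le) hVH hVb (hsub hu) (hUH u hu).ge

theorem isSCD_of_union_isSCD_hyperplane
    {X : Type*} [NormedAddCommGroup X] [NormedSpace ℝ X] [CompleteSpace X]
    (U V : Set X) (hU : U.Nonempty) (hUb : IsBounded U)
    (hV : V.Nonempty) (hVb : IsBounded V)
    (x₀ : X →L[ℝ] ℝ) (hx₀ : x₀ ≠ 0) (c : ℝ) (ε₀ : ℝ) (hε₀ : 0 < ε₀)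
    (hUH : ∀ x ∈ U, x₀ x = c) (hVH : ∀ x ∈ V, x₀ x < c - ε₀)
    (hUV : IsSCD (U ∪ V)) :
    IsSCD U :=
  isSCD_of_union_isSCD_hyperplane_general hU hUb hVb hε₀ hUH (fun x hx ↦ (hVH x hx).le) hUV
end
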